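/- As an identity of formal power series in x_1,…,x_r with integer coefficients: (1 − x_1⋯x_r)/((1−x_1)^r ⋯ (1−x_r)^r) = Σ_{λ ∈ Par(r−1)} s_λ(1,…,1) · s_λ(x_1,…,x_r), where the sum is over all partitions λ with at most r−1 parts. -/

import Mathlib

/-!
The identity is the Cauchy identity `∑_λ s_λ(x) s_λ(y) = ∏_{i,k} 1 / (1 - x_i y_k)` over partitions
with at most `r` parts, specialized at `y = (1, …, 1)`, followed by a shift argument.

The Cauchy identity (`cauchy_identity`) is proved for power series in `x` over `ℤ[y]`. Expanding
`det (1 / (1 - x_i y_j))` into geometric series gives `∑_λ a_{λ+δ}(x) a_{λ+δ}(y)`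
(`hasSum_alternants`), where `a_n` is the alternant with exponents `n` and `δ = (r-1, …, 0)`; by the
definition of Schur polynomials this is the Vandermonde products of `x` and of `y` times
`∑_λ s_λ(x) s_λ(y)`. On the other hand, Cauchy's determinant (`cauchy_det`) evaluates it as the two
Vandermonde products divided by `∏_{i,k} (1 - x_i y_k)`. The Vandermonde products cancel, and only
then can `y` be set to `(1, …, 1)`.

Let `F` be the resulting sum over all partitions with at most `r` parts and `F'` the part with last
part `0`. The remaining partitions are the `λ + (1, …, 1)`, and `s_{λ+(1,…,1)} = x_1 ⋯ x_r s_λ`, so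
`F - F' = x_1 ⋯ x_r F` (`schurSeries_sub`). Hence `F' = (1 - x_1 ⋯ x_r) F`.

Infinite sums are `HasSum`s in the product topology on power series. They converge because `s_λ` is
homogeneous of degree `|λ|` (`coeff_schur_eq_zero`).
-/

/-- The Vandermonde product `∏_{i<j} (x_i - x_j)`. -/
noncomputable def vdm (r : ℕ) : MvPolynomial (Fin r) ℤ :=
  ∏ p ∈ Finset.univ.filter (fun p : Fin r × Fin r => p.1 < p.2),
    (MvPolynomial.X p.1 - MvPolynomial.X p.2)

/-- The matrix `(x_i^{ξ_j + r - j})_{i,j}` (with `j` running from `0` to `r-1`,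
so the exponent is `ξ_j + (r - 1 - j)`). -/
noncomputable def schurMat (r : ℕ) (ξ : Fin r → ℕ) :
    Matrix (Fin r) (Fin r) (MvPolynomial (Fin r) ℤ) :=
  fun i j => MvPolynomial.X i ^ (ξ j + (r - 1 - (j : ℕ)))

/-- `SchurDef r ξ s` says that `s` is the Schur polynomial of `ξ`, i.e. the (unique)
polynomial with `s · ∏_{i<j}(x_i - x_j) = det((x_i^{ξ_j + r - j}))`. -/
def SchurDef (r : ℕ) (ξ : Fin r → ℕ) (s : MvPolynomial (Fin r) ℤ) : Prop :=
  s * vdm r = (schurMat r ξ).det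

/-- The power series `Σ_{λ ∈ Par(r-1)} s_λ(1,…,1)·s_λ(x₁,…,x_r)`, defined
coefficientwise: at a monomial `d`, only the finitely many partitions `λ` with at most
`r-1` parts (i.e. last part `0`) and `|λ| = |d|` contribute. -/
noncomputable def schurSum' (r : ℕ) (s : (Fin r → ℕ) → MvPolynomial (Fin r) ℤ) :
    MvPowerSeries (Fin r) ℤ :=
  fun d =>
    ∑ ξ : Fin r → Fin ((∑ i, d i) + 1),
      if (∀ i j : Fin r, i ≤ j → (ξ j : ℕ) ≤ (ξ i : ℕ)) ∧
          (∀ h : r - 1 < r, (ξ ⟨r - 1, h⟩ : ℕ) = 0) ∧ (∑ j, (ξ j : ℕ)) = ∑ i, d i then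
        MvPolynomial.eval (fun _ => (1 : ℤ)) (s fun j => (ξ j : ℕ)) *
          MvPolynomial.coeff d (s fun j => (ξ j : ℕ))
      else 0

open Finset Matrix

/-! ### Cauchy's determinant -/

/-- The entries of row `i` are polynomials of degree `< r` in `x i` with coefficients depending only
on `y`, so the matrix factors through the Vandermonde matrix of `x`. -/
theorem cauchy_factor {K : Type*} [Field K] {r : ℕ} (y : Fin r → K) :
    ∃ C : Matrix (Fin r) (Fin r) K, ∀ x : Fin r → K,
      (Matrix.of fun i j => ∏ k ∈ univ.erase j, (1 - x i * y k)) = vandermonde x * C := by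
  refine ⟨Matrix.of fun k j =>
    (∏ l ∈ univ.erase j, (1 - Polynomial.X * Polynomial.C (y l))).coeff k, fun x => ?_⟩
  ext i j
  have hdeg : (∏ l ∈ univ.erase j, (1 - Polynomial.X * Polynomial.C (y l))).natDegree < r := by
    refine lt_of_le_of_lt (Polynomial.natDegree_prod_le _ _) ?_
    refine lt_of_le_of_lt (Finset.sum_le_card_nsmul _ _ 1 fun l _ => ?_) ?_
    · compute_degree
    · have := j.pos
      simp
      omega
  have h := Polynomial.eval_eq_sum_range' hdeg (x i)
  rw [Polynomial.eval_prod] at h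
  simp only [Polynomial.eval_sub, Polynomial.eval_one, Polynomial.eval_mul, Polynomial.eval_X,
    Polynomial.eval_C] at h
  rw [Matrix.of_apply, h, Finset.sum_range, Matrix.mul_apply]
  exact Finset.sum_congr rfl fun k _ => by rw [vandermonde_apply, Matrix.of_apply, mul_comm]

/-- Cauchy's determinant with denominators cleared. The `x`-independent factor of `cauchy_factor` is
found by specializing to `x i = (y i)⁻¹`, where the matrix becomes diagonal. -/
theorem cauchy_det_field {K : Type*} [Field K] {r : ℕ} (x y : Fin r → K)
    (hy0 : ∀ i, y i ≠ 0) (hy : Function.Injective y) :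
    (Matrix.of fun i j => ∏ k ∈ univ.erase j, (1 - x i * y k)).det =
      (∏ i, ∏ j ∈ Ioi i, (x i - x j)) * ∏ i, ∏ j ∈ Ioi i, (y i - y j) := by
  obtain ⟨C, hC⟩ := cauchy_factor y
  -- For `i ≠ j` the factor with index `k = i` vanishes.
  have hdiag : (Matrix.of fun i j => ∏ k ∈ univ.erase j, (1 - (y i)⁻¹ * y k)) =
      Matrix.diagonal fun i => ∏ k ∈ univ.erase i, (1 - (y i)⁻¹ * y k) := by
    ext i j
    by_cases h : i = j
    · subst h; simp
    · rw [Matrix.diagonal_apply_ne _ h, Matrix.of_apply]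
      refine Finset.prod_eq_zero (i := i) (by simp [h]) ?_
      simp [hy0 i]
  have hC' := congrArg Matrix.det (hC fun i => (y i)⁻¹)
  have hoff := Finset.prod_prod_Ioi_mul_eq_prod_prod_off_diag (fun j i => 1 - (y i)⁻¹ * y j)
  simp only [← Finset.compl_singleton] at hC' hdiag ⊢
  rw [hdiag, det_diagonal, ← hoff, det_mul, det_vandermonde] at hC'
  have hne : (∏ i, ∏ j ∈ Ioi i, ((y j)⁻¹ - (y i)⁻¹)) ≠ 0 := by
    refine Finset.prod_ne_zero_iff.2 fun i _ => Finset.prod_ne_zero_iff.2 fun j hj => ?_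
    rw [sub_ne_zero]
    intro h
    exact (Finset.mem_Ioi.1 hj).ne' (hy (inv_injective h))
  have hdet : C.det = ∏ i, ∏ j ∈ Ioi i, (y j - y i) := by
    refine mul_left_cancel₀ hne ?_
    rw [← hC', ← Finset.prod_mul_distrib]
    refine Finset.prod_congr rfl fun i _ => ?_
    rw [← Finset.prod_mul_distrib]
    refine Finset.prod_congr rfl fun j _ => ?_
    have := hy0 i
    have := hy0 j
    field_simp
  have := congrArg Matrix.det (hC x)
  simp only [← Finset.compl_singleton] at this
  rw [this, det_mul, det_vandermonde, hdet, ← Finset.prod_mul_distrib, ← Finset.prod_mul_distrib]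
  refine Finset.prod_congr rfl fun i _ => ?_
  rw [← Finset.prod_mul_distrib, ← Finset.prod_mul_distrib]
  exact Finset.prod_congr rfl fun j _ => by ring

theorem cauchy_det {B : Type*} [CommRing B] [IsDomain B] {r : ℕ} (x y : Fin r → B)
    (hy0 : ∀ i, y i ≠ 0) (hy : Function.Injective y) :
    (Matrix.of fun i j => ∏ k ∈ univ.erase j, (1 - x i * y k)).det =
      (∏ i, ∏ j ∈ Ioi i, (x i - x j)) * ∏ i, ∏ j ∈ Ioi i, (y i - y j) := by
  let φ := algebraMap B (FractionRing B)
  have hφ : Function.Injective φ := IsFractionRing.injective B (FractionRing B)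
  apply hφ
  have := cauchy_det_field (fun i => φ (x i)) (fun i => φ (y i))
    (fun i => by simpa [map_eq_zero_iff φ hφ] using hy0 i) (hφ.comp hy)
  rw [RingHom.map_det]
  simp only [map_mul, map_prod, map_sub]
  rw [← this]
  congr 1
  ext i j
  simp [RingHom.mapMatrix_apply]

/-! ### Homogeneity of Schur polynomials -/

theorem vdm_eq (r : ℕ) : vdm r =
    ∏ i : Fin r, ∏ j ∈ Ioi i, (MvPolynomial.X i - MvPolynomial.X j) := by
  rw [vdm]
  exact Finset.prod_finset_product _ univ (fun i => Ioi i) (by simp)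

theorem vdm_ne_zero (r : ℕ) : vdm r ≠ 0 := by
  refine Finset.prod_ne_zero_iff.2 fun p hp => ?_
  rw [sub_ne_zero]
  exact fun h => (Finset.mem_filter.1 hp).2.ne (MvPolynomial.X_injective h)

theorem vdm_isHomogeneous (r : ℕ) :
    (vdm r).IsHomogeneous (∑ j : Fin r, (r - 1 - (j : ℕ))) := by
  rw [vdm_eq]
  refine MvPolynomial.IsHomogeneous.prod _ _ _ fun i _ => ?_
  have h := MvPolynomial.IsHomogeneous.prod (Ioi i)
    (fun j => (MvPolynomial.X i - MvPolynomial.X j : MvPolynomial (Fin r) ℤ)) (fun _ => 1)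
    fun j _ => (MvPolynomial.isHomogeneous_X _ _).sub (MvPolynomial.isHomogeneous_X _ _)
  simpa using h

theorem det_schurMat_isHomogeneous (r : ℕ) (ξ : Fin r → ℕ) :
    (schurMat r ξ).det.IsHomogeneous (∑ j, ξ j + ∑ j : Fin r, (r - 1 - (j : ℕ))) := by
  rw [Matrix.det_apply, ← Finset.sum_add_distrib]
  refine MvPolynomial.IsHomogeneous.sum _ _ _ fun σ _ => ?_
  have h : (∏ i, schurMat r ξ (σ i) i).IsHomogeneous (∑ j, (ξ j + (r - 1 - (j : ℕ)))) :=
    MvPolynomial.IsHomogeneous.prod _ _ _ fun i _ => MvPolynomial.isHomogeneous_X_pow _ _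
  rcases Int.units_eq_one_or (Equiv.Perm.sign σ) with hσ | hσ
  · simpa [hσ] using h
  · simpa [hσ] using h.neg

theorem homogeneousComponent_mul_add {σ : Type*} (p q : MvPolynomial σ ℤ) (k m : ℕ)
    (hq : q.IsHomogeneous m) :
    MvPolynomial.homogeneousComponent (k + m) (p * q) =
      MvPolynomial.homogeneousComponent k p * q := by
  let _ := MvPolynomial.gradedAlgebra (σ := σ) (R := ℤ)
  have := DirectSum.coe_decompose_mul_add_of_right_mem (MvPolynomial.homogeneousSubmodule σ ℤ)
    (i := k) (j := m) (a := p) (b := q) hq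
  rw [← MvPolynomial.decomposition.decompose'_apply, ← MvPolynomial.decomposition.decompose'_apply]
  exact this

/-- The Schur polynomial of `ξ` is homogeneous of degree `|ξ|`, as a quotient of two homogeneous
polynomials. -/
theorem coeff_schur_eq_zero {r : ℕ} {ξ : Fin r → ℕ} {s : MvPolynomial (Fin r) ℤ}
    (hs : SchurDef r ξ s) (d : Fin r →₀ ℕ) (hd : ∑ i, d i ≠ ∑ i, ξ i) : s.coeff d = 0 := by
  have h := homogeneousComponent_mul_add s (vdm r) (∑ i, d i) _ (vdm_isHomogeneous r)
  rw [SchurDef] at hs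
  rw [hs, MvPolynomial.homogeneousComponent_of_mem (det_schurMat_isHomogeneous r ξ),
    if_neg (by omega)] at h
  have h0 := (mul_eq_zero.1 h.symm).resolve_right (vdm_ne_zero r)
  have := congrArg (MvPolynomial.coeff d) h0
  rwa [MvPolynomial.coeff_homogeneousComponent, if_pos (Finsupp.degree_eq_sum d),
    MvPolynomial.coeff_zero] at this

/-! ### Series of Schur polynomials -/

/-- An integer polynomial regarded as a power series over `R`. -/
noncomputable def toSeries (r : ℕ) (R : Type*) [CommRing R] :
    MvPolynomial (Fin r) ℤ →+* MvPowerSeries (Fin r) R :=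
  MvPolynomial.coeToMvPowerSeries.ringHom.comp (MvPolynomial.map (Int.castRingHom R))

theorem coeff_toSeries {r : ℕ} {R : Type*} [CommRing R] (p : MvPolynomial (Fin r) ℤ)
    (d : Fin r →₀ ℕ) : MvPowerSeries.coeff d (toSeries r R p) = ((p.coeff d : ℤ) : R) := by
  simp [toSeries, MvPolynomial.coeff_map]

theorem toSeries_X {r : ℕ} {R : Type*} [CommRing R] (i : Fin r) :
    toSeries r R (MvPolynomial.X i) = MvPowerSeries.X i := by
  simp [toSeries]

/-- The power series `∑_ξ c ξ · s_ξ(x)` over all `ξ : Fin r → ℕ`, defined coefficientwise: only `ξ`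
with `|ξ| = |d|`, hence with entries at most `|d|`, contribute to the coefficient at `d`. -/
noncomputable def schurSeries {r : ℕ} {R : Type*} [CommRing R]
    (s : (Fin r → ℕ) → MvPolynomial (Fin r) ℤ) (c : (Fin r → ℕ) → R) :
    MvPowerSeries (Fin r) R :=
  fun d => ∑ ξ : Fin r → Fin ((∑ i, d i) + 1),
    c (fun j => (ξ j : ℕ)) * (((s fun j => (ξ j : ℕ)).coeff d : ℤ) : R)

open scoped MvPowerSeries.WithPiTopology

/-- Convergence is in the product topology; no assumption on the topology of `R` is needed because
each coefficient is a finite sum. -/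
theorem hasSum_schurSeries {r : ℕ} {R : Type*} [CommRing R] [TopologicalSpace R]
    {s : (Fin r → ℕ) → MvPolynomial (Fin r) ℤ} (hs : ∀ ξ, SchurDef r ξ (s ξ))
    (c : (Fin r → ℕ) → R) :
    HasSum (fun ξ => MvPowerSeries.C (c ξ) * toSeries r R (s ξ)) (schurSeries s c) := by
  rw [MvPowerSeries.WithPiTopology.hasSum_iff_hasSum_coeff]
  intro d
  simp only [MvPowerSeries.coeff_C_mul, coeff_toSeries]
  have hι : Function.Injective
      (fun (ξ : Fin r → Fin ((∑ i, d i) + 1)) (j : Fin r) => (ξ j : ℕ)) :=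
    fun ξ η h => funext fun j => Fin.ext (congrFun h j)
  refine (hι.hasSum_iff ?_).1 (hasSum_fintype _)
  intro ξ hξ
  rw [coeff_schur_eq_zero (hs ξ) d, Int.cast_zero, mul_zero]
  intro hd
  refine hξ ⟨fun j => ⟨ξ j, ?_⟩, rfl⟩
  rw [hd, Nat.lt_succ_iff]
  exact Finset.single_le_sum (f := ξ) (fun _ _ => Nat.zero_le _) (mem_univ j)

/-- The exponents of `a_{ξ+δ}` are the rearrangements of `ξ + δ`, where `δ = (r-1, …, 0)`. -/
theorem coeff_alternant {r : ℕ} {R : Type*} [CommRing R] (ξ : Fin r → ℕ) (d : Fin r →₀ ℕ) :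
    MvPowerSeries.coeff d (toSeries r R (schurMat r ξ).det) =
      ∑ σ : Equiv.Perm (Fin r), if ∀ j, d (σ j) = ξ j + (r - 1 - (j : ℕ)) then
        ((Equiv.Perm.sign σ : ℤ) : R) else 0 := by
  rw [coeff_toSeries, Matrix.det_apply', MvPolynomial.coeff_sum, Int.cast_sum]
  refine Finset.sum_congr rfl fun σ _ => ?_
  have hprod : ∏ i, schurMat r ξ (σ i) i = MvPolynomial.monomial
      (Finsupp.equivFunOnFinite.symm fun i =>
        ξ (σ.symm i) + (r - 1 - (σ.symm i : ℕ))) (1 : ℤ) := by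
    rw [MvPolynomial.monomial_eq, Finsupp.prod_fintype _ _ (fun _ => pow_zero _), map_one, one_mul]
    refine Fintype.prod_equiv σ _ _ fun i => ?_
    simp [schurMat]
  have hC : ((Equiv.Perm.sign σ : ℤ) : MvPolynomial (Fin r) ℤ) =
      MvPolynomial.C (Equiv.Perm.sign σ : ℤ) := by simp
  rw [hprod, hC, MvPolynomial.coeff_C_mul, MvPolynomial.coeff_monomial]
  have hiff : (Finsupp.equivFunOnFinite.symm fun i =>
        ξ (σ.symm i) + (r - 1 - (σ.symm i : ℕ))) = d ↔
      ∀ j, d (σ j) = ξ j + (r - 1 - (j : ℕ)) := by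
    rw [Finsupp.ext_iff, ← σ.forall_congr_right]
    simp [eq_comm]
  simp only [hiff]
  split_ifs <;> simp

/-! ### The determinant of geometric series -/

/-- The geometric series `∑_k (a x_i)^k = 1 / (1 - a x_i)`, given by its coefficients. -/
noncomputable def geomSeries {r : ℕ} {A : Type*} [CommRing A] (i : Fin r) (a : A) :
    MvPowerSeries (Fin r) A :=
  fun e => if e = Finsupp.single i (e i) then a ^ e i else 0

theorem coeff_geomSeries {r : ℕ} {A : Type*} [CommRing A] (i : Fin r) (a : A) (e : Fin r →₀ ℕ) :
    MvPowerSeries.coeff e (geomSeries i a) =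
      if e = Finsupp.single i (e i) then a ^ e i else 0 := rfl

theorem one_sub_mul_geomSeries {r : ℕ} {A : Type*} [CommRing A] (i : Fin r) (a : A) :
    (1 - MvPowerSeries.X i * MvPowerSeries.C a) * geomSeries i a = 1 := by
  let _ : TopologicalSpace A := ⊥
  have _ : DiscreteTopology A := ⟨rfl⟩
  have hsum : HasSum (fun k : ℕ => (MvPowerSeries.X i * MvPowerSeries.C a) ^ k)
      (geomSeries i a) := by
    rw [MvPowerSeries.WithPiTopology.hasSum_iff_hasSum_coeff]
    intro e
    have hco : ∀ k : ℕ, MvPowerSeries.coeff e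
        ((MvPowerSeries.X i * MvPowerSeries.C a) ^ k : MvPowerSeries (Fin r) A) =
          if e = Finsupp.single i k then a ^ k else 0 := by
      intro k
      rw [mul_pow, ← map_pow, mul_comm, MvPowerSeries.coeff_C_mul, MvPowerSeries.coeff_X_pow]
      split_ifs <;> simp
    simp only [hco, coeff_geomSeries]
    refine hasSum_single (e i) fun k hk => if_neg ?_
    rintro rfl
    simp at hk
  rw [← hsum.tsum_eq]
  exact MvPowerSeries.WithPiTopology.one_sub_mul_tsum_pow_of_constantCoeff_eq_zero (by simp)

theorem coeff_prod_geomSeries {r : ℕ} {A : Type*} [CommRing A] (y : Fin r → A)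
    (σ : Equiv.Perm (Fin r)) (d : Fin r →₀ ℕ) :
    MvPowerSeries.coeff d (∏ j, geomSeries (σ j) (y j)) = ∏ j, y j ^ d (σ j) := by
  rw [MvPowerSeries.coeff_prod]
  have hmem : (Finsupp.equivFunOnFinite.symm fun j => Finsupp.single (σ j) (d (σ j))) ∈
      finsuppAntidiag univ d := by
    rw [mem_finsuppAntidiag]
    refine ⟨?_, subset_univ _⟩
    simp only [Finsupp.equivFunOnFinite_symm_apply_apply]
    rw [Equiv.sum_comp σ fun i => Finsupp.single i (d i)]
    exact Finsupp.univ_sum_single d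
  rw [Finset.sum_eq_single_of_mem _ hmem]
  · exact Finset.prod_congr rfl fun j _ => by simp [coeff_geomSeries]
  · intro l hl hne
    by_contra h
    apply hne
    have hsingle : ∀ j, l j = Finsupp.single (σ j) (l j (σ j)) := by
      intro j
      by_contra hj
      exact h (Finset.prod_eq_zero (mem_univ j) (by rw [coeff_geomSeries, if_neg hj]))
    ext1 j
    have hsum := DFunLike.congr_fun (mem_finsuppAntidiag.1 hl).1 (σ j)
    rw [Finsupp.finsetSum_apply, Finset.sum_eq_single_of_mem j (mem_univ j)] at hsum
    · rw [hsingle j, hsum]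
      simp
    · intro k _ hk
      rw [hsingle k, Finsupp.single_eq_of_ne]
      simpa using fun h => hk h.symm

/-- The coefficient of `x^d` in `det (1 / (1 - x_i y_j))` is the alternant of `y` with exponents `d`. -/
theorem coeff_det_geomSeries {r : ℕ} {A : Type*} [CommRing A] (y : Fin r → A) (d : Fin r →₀ ℕ) :
    MvPowerSeries.coeff d (Matrix.of fun i j => geomSeries i (y j)).det =
      (Matrix.of fun i j => y i ^ d j).det := by
  rw [← Matrix.det_transpose (Matrix.of fun i j => y i ^ d j), Matrix.det_apply',
    Matrix.det_apply', map_sum]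
  refine Finset.sum_congr rfl fun σ _ => ?_
  have hC : ((Equiv.Perm.sign σ : ℤ) : MvPowerSeries (Fin r) A) =
      MvPowerSeries.C ((Equiv.Perm.sign σ : ℤ) : A) := by simp
  rw [hC, MvPowerSeries.coeff_C_mul]
  simp only [Matrix.of_apply, Matrix.transpose_apply, coeff_prod_geomSeries]

/-! ### The Cauchy identity -/

theorem strictAnti_add_staircase {r : ℕ} {ξ : Fin r → ℕ} (h : Antitone ξ) :
    StrictAnti fun j : Fin r => ξ j + (r - 1 - (j : ℕ)) := by
  intro i j hij
  have := h hij.le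
  have := j.isLt
  have : (i : ℕ) < j := hij
  simp only
  omega

theorem exists_antitone_of_strictAnti {r : ℕ} {n : Fin r → ℕ} (h : StrictAnti n) :
    ∃ ξ : Fin r → ℕ, Antitone ξ ∧ ∀ j, n j = ξ j + (r - 1 - (j : ℕ)) := by
  have key : ∀ (k : ℕ) (i j : Fin r), (j : ℕ) = i + k → n j + k ≤ n i := by
    intro k
    induction k with
    | zero =>
      intro i j hij
      rw [Fin.ext (a := j) (b := i) (by simpa using hij), add_zero]
    | succ k ih =>
      intro i j hij
      have hj := j.isLt
      have h1 := ih i ⟨i + k, by omega⟩ rfl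
      have h2 : n j < n ⟨i + k, by omega⟩ := h (Fin.lt_def.2 (by simp only; omega))
      omega
  have hlow : ∀ j : Fin r, r - 1 - (j : ℕ) ≤ n j := by
    intro j
    have hj := j.isLt
    have := key (r - 1 - j) j ⟨r - 1, by omega⟩ (by simp only; omega)
    omega
  refine ⟨fun j => n j - (r - 1 - (j : ℕ)), fun i j hij => ?_, fun j => ?_⟩
  · have hj := j.isLt
    have hij' : (i : ℕ) ≤ j := hij
    have := key (j - i) i j (by omega)
    have := hlow j
    simp only
    omega
  · have := hlow j
    simp only
    omega

theorem exists_perm_strictAnti {r : ℕ} {d : Fin r → ℕ} (hd : Function.Injective d) :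
    ∃ τ : Equiv.Perm (Fin r), StrictAnti (d ∘ τ) := by
  refine ⟨Fin.revPerm.trans (Tuple.sort d), ?_⟩
  have hm : StrictMono (d ∘ Tuple.sort d) :=
    (Tuple.monotone_sort d).strictMono_of_injective (hd.comp (Tuple.sort d).injective)
  intro i j hij
  exact hm (Fin.rev_lt_rev.2 hij)

open Classical in
/-- The expansion `det (1 / (1 - x_i y_j)) = ∑_ξ a_{ξ+δ}(y) a_{ξ+δ}(x)` over partitions `ξ`. At the
monomial `x^d` with `d` injective only the `ξ` for which `ξ + δ` is the decreasing rearrangement of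
`d` contributes; if `d` has a repeated entry, both sides vanish. -/
theorem hasSum_alternants (r : ℕ) [TopologicalSpace (MvPolynomial (Fin r) ℤ)] :
    HasSum (fun ξ : Fin r → ℕ =>
        MvPowerSeries.C (if Antitone ξ then (schurMat r ξ).det else 0) *
          toSeries r (MvPolynomial (Fin r) ℤ) (schurMat r ξ).det)
      (Matrix.of fun i j => geomSeries i (MvPolynomial.X j : MvPolynomial (Fin r) ℤ)).det := by
  rw [MvPowerSeries.WithPiTopology.hasSum_iff_hasSum_coeff]
  intro d
  simp only [MvPowerSeries.coeff_C_mul, coeff_alternant, coeff_det_geomSeries]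
  -- A nonzero term requires `d` to be a rearrangement of `ξ + δ`.
  have hzero : ∀ ξ : Fin r → ℕ,
      (Antitone ξ → ∀ σ : Equiv.Perm (Fin r), ¬ ∀ j, d (σ j) = ξ j + (r - 1 - (j : ℕ))) →
      (if Antitone ξ then (schurMat r ξ).det else 0) *
        (∑ σ : Equiv.Perm (Fin r), if ∀ j, d (σ j) = ξ j + (r - 1 - (j : ℕ)) then
          ((Equiv.Perm.sign σ : ℤ) : MvPolynomial (Fin r) ℤ) else 0) = 0 := by
    intro ξ h
    by_cases hξ : Antitone ξ
    · rw [Finset.sum_eq_zero fun σ _ => if_neg (h hξ σ), mul_zero]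
    · rw [if_neg hξ, zero_mul]
  by_cases hd : Function.Injective d
  · obtain ⟨τ, hτ⟩ := exists_perm_strictAnti hd
    obtain ⟨ξ₀, hξ₀, hτξ⟩ := exists_antitone_of_strictAnti hτ
    have hval : (Matrix.of fun i j => (MvPolynomial.X i : MvPolynomial (Fin r) ℤ) ^ d j).det =
        (if Antitone ξ₀ then (schurMat r ξ₀).det else 0) *
        (∑ σ : Equiv.Perm (Fin r), if ∀ j, d (σ j) = ξ₀ j + (r - 1 - (j : ℕ)) then
          ((Equiv.Perm.sign σ : ℤ) : MvPolynomial (Fin r) ℤ) else 0) := by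
      rw [if_pos hξ₀, Finset.sum_eq_single_of_mem τ (mem_univ τ),
        if_pos (show ∀ j, d (τ j) = _ from hτξ)]
      · have hmat : schurMat r ξ₀ = (Matrix.of fun i j =>
            (MvPolynomial.X i : MvPolynomial (Fin r) ℤ) ^ d j).submatrix id τ := by
          ext1 i j
          simp only [schurMat, ← hτξ j]
          rfl
        rw [hmat, Matrix.det_permute', mul_right_comm, ← Int.cast_mul]
        simp
      · intro σ _ hσ
        refine if_neg fun h => hσ ?_
        ext1 j
        exact hd ((h j).trans (hτξ j).symm)
    rw [hval]
    refine hasSum_single ξ₀ fun ξ hne => hzero ξ fun hξ σ h => hne ?_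
    have hσ : Antitone (d ∘ σ) := by
      rw [show d ∘ σ = fun j : Fin r => ξ j + (r - 1 - (j : ℕ)) from funext h]
      exact (strictAnti_add_staircase hξ).antitone
    have heq := Tuple.unique_antitone hσ hτ.antitone
    ext1 j
    have := congrFun heq j
    have := h j
    have := hτξ j
    simp only [Function.comp_apply] at *
    omega
  · have hdet : (Matrix.of fun i j =>
        (MvPolynomial.X i : MvPolynomial (Fin r) ℤ) ^ d j).det = 0 := by
      obtain ⟨a, b, hab, hne⟩ : ∃ a b, d a = d b ∧ a ≠ b := by
        simpa [Function.Injective] using hd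
      exact Matrix.det_zero_of_column_eq hne fun i => by simp [hab]
    rw [hdet]
    convert hasSum_zero with ξ
    refine hzero ξ fun hξ σ h => hd ?_
    have hinj : Function.Injective (d ∘ σ) := by
      rw [show d ∘ σ = fun j : Fin r => ξ j + (r - 1 - (j : ℕ)) from funext h]
      exact (strictAnti_add_staircase hξ).injective
    exact (Equiv.injective_comp σ d).1 hinj

open Classical in
/-- The Cauchy identity `∏_{i,k} (1 - x_i y_k) · ∑_ξ s_ξ(y) s_ξ(x) = 1`, as power series in `x` with
coefficients in `ℤ[y]`. -/
theorem cauchy_identity {r : ℕ} {s : (Fin r → ℕ) → MvPolynomial (Fin r) ℤ}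
    (hs : ∀ ξ, SchurDef r ξ (s ξ)) :
    (∏ i : Fin r, ∏ k : Fin r, (1 - MvPowerSeries.X i *
        MvPowerSeries.C (MvPolynomial.X k : MvPolynomial (Fin r) ℤ))) *
      schurSeries s (fun ξ => if Antitone ξ then s ξ else 0) = 1 := by
  let _ : TopologicalSpace (MvPolynomial (Fin r) ℤ) := ⊥
  have _ : DiscreteTopology (MvPolynomial (Fin r) ℤ) := ⟨rfl⟩
  have _ : IsDomain (MvPowerSeries (Fin r) (MvPolynomial (Fin r) ℤ)) :=
    NoZeroDivisors.to_isDomain _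
  have hX : Function.Injective
      (MvPowerSeries.X : Fin r → MvPowerSeries (Fin r) (MvPolynomial (Fin r) ℤ)) := by
    intro i j h
    rwa [MvPowerSeries.X_inj] at h
  set V := toSeries r (MvPolynomial (Fin r) ℤ) (vdm r) with hV
  set W : MvPowerSeries (Fin r) (MvPolynomial (Fin r) ℤ) := MvPowerSeries.C (vdm r) with hW
  have hVprod : V = ∏ i, ∏ j ∈ Ioi i, (MvPowerSeries.X i - MvPowerSeries.X j) := by
    simp [hV, vdm_eq, toSeries_X]
  have hWprod : W = ∏ i, ∏ j ∈ Ioi i,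
      (MvPowerSeries.C (MvPolynomial.X i) - MvPowerSeries.C (MvPolynomial.X j)) := by
    simp [hW, vdm_eq]
  have hV0 : V ≠ 0 := by
    rw [hVprod]
    refine Finset.prod_ne_zero_iff.2 fun i _ => Finset.prod_ne_zero_iff.2 fun j hj => ?_
    exact sub_ne_zero.2 fun h => (Finset.mem_Ioi.1 hj).ne (hX h)
  have hCinj : Function.Injective
      (MvPowerSeries.C (σ := Fin r) (R := MvPolynomial (Fin r) ℤ)) := MvPowerSeries.C_injective
  have hW0 : W ≠ 0 := (map_ne_zero_iff _ hCinj).2 (vdm_ne_zero r)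
  have hdet : V * W * schurSeries s (fun ξ => if Antitone ξ then s ξ else 0) =
      (Matrix.of fun i j => geomSeries i (MvPolynomial.X j : MvPolynomial (Fin r) ℤ)).det := by
    refine HasSum.unique ?_ (hasSum_alternants r)
    have hmul := (hasSum_schurSeries hs
      (fun ξ => if Antitone ξ then s ξ else 0)).mul_left (V * W)
    refine (congrArg (fun f => HasSum f _) (funext fun ξ => ?_)).mp hmul
    have h := hs ξ
    rw [SchurDef] at h
    rw [← h, map_mul]
    split_ifs
    · rw [map_mul]; ring
    · simp
  have hcauchy := cauchy_det (fun i : Fin r =>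
      (MvPowerSeries.X i : MvPowerSeries (Fin r) (MvPolynomial (Fin r) ℤ)))
    (fun k => MvPowerSeries.C (MvPolynomial.X k : MvPolynomial (Fin r) ℤ))
    (fun k => (map_ne_zero_iff _ hCinj).2 (MvPolynomial.X_ne_zero k))
    (hCinj.comp MvPolynomial.X_injective)
  have hrow := Matrix.det_mul_column (fun i : Fin r => ∏ k : Fin r, (1 - MvPowerSeries.X i *
        MvPowerSeries.C (MvPolynomial.X k : MvPolynomial (Fin r) ℤ)))
    (Matrix.of fun i j => geomSeries i (MvPolynomial.X j : MvPolynomial (Fin r) ℤ))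
  have hmat : (Matrix.of fun i j : Fin r => (∏ k : Fin r, (1 - MvPowerSeries.X i *
        MvPowerSeries.C (MvPolynomial.X k : MvPolynomial (Fin r) ℤ))) *
      (Matrix.of fun i j => geomSeries i (MvPolynomial.X j : MvPolynomial (Fin r) ℤ)) i j) =
      Matrix.of fun i j : Fin r => ∏ k ∈ univ.erase j, (1 - MvPowerSeries.X i *
        MvPowerSeries.C (MvPolynomial.X k : MvPolynomial (Fin r) ℤ)) := by
    ext1 i j
    rw [Matrix.of_apply, Matrix.of_apply, Matrix.of_apply, ← Finset.prod_erase_mul _ _ (mem_univ j),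
      mul_assoc, one_sub_mul_geomSeries, mul_one]
  rw [hmat, hcauchy, ← hVprod, ← hWprod, ← hdet] at hrow
  refine mul_left_cancel₀ (mul_ne_zero hV0 hW0) ?_
  rw [mul_one, mul_left_comm]
  exact hrow.symm

open Classical in
/-- The Cauchy identity at `y = (1, …, 1)`. -/
theorem cauchy_identity_one {r : ℕ} {s : (Fin r → ℕ) → MvPolynomial (Fin r) ℤ}
    (hs : ∀ ξ, SchurDef r ξ (s ξ)) :
    (∏ i : Fin r, (1 - MvPowerSeries.X i) ^ r) *
      schurSeries s (fun ξ => if Antitone ξ then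
        MvPolynomial.eval (fun _ => (1 : ℤ)) (s ξ) else 0) = 1 := by
  have h := congrArg (MvPowerSeries.map (MvPolynomial.eval fun _ : Fin r => (1 : ℤ)))
    (cauchy_identity hs)
  have hmap : MvPowerSeries.map (MvPolynomial.eval fun _ : Fin r => (1 : ℤ))
      (schurSeries s fun ξ => if Antitone ξ then s ξ else 0) =
      schurSeries s (fun ξ => if Antitone ξ then
        MvPolynomial.eval (fun _ => (1 : ℤ)) (s ξ) else 0) := by
    ext d
    rw [MvPowerSeries.coeff_map]
    simp only [schurSeries, MvPowerSeries.coeff_apply, map_sum, map_mul, map_intCast]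
    refine Finset.sum_congr rfl fun ξ _ => ?_
    split_ifs <;> simp
  rw [map_mul, hmap] at h
  simpa [map_prod, MvPowerSeries.map_C, MvPowerSeries.map_X] using h

/-! ### Restriction to partitions with at most `r - 1` parts -/

theorem schur_add_one {r : ℕ} {s : (Fin r → ℕ) → MvPolynomial (Fin r) ℤ}
    (hs : ∀ ξ, SchurDef r ξ (s ξ)) (ξ : Fin r → ℕ) :
    s (fun j => ξ j + 1) = (∏ i, MvPolynomial.X i) * s ξ := by
  refine mul_right_cancel₀ (vdm_ne_zero r) ?_
  have h1 := hs ξ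
  have h2 := hs fun j => ξ j + 1
  rw [SchurDef] at h1 h2
  rw [h2, mul_assoc, h1, ← Matrix.det_mul_column]
  congr 1
  ext1 i j
  simp only [schurMat, Matrix.of_apply]
  ring

open Classical in
/-- The partitions with nonzero last part are exactly those of the form `ξ + (1, …, 1)`, and adding
`(1, …, 1)` to `ξ` multiplies `s_ξ` by `x_1 ⋯ x_r` without changing its value at `(1, …, 1)`. -/
theorem schurSeries_sub {r : ℕ} (hr : 0 < r) {s : (Fin r → ℕ) → MvPolynomial (Fin r) ℤ}
    (hs : ∀ ξ, SchurDef r ξ (s ξ)) :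
    schurSeries s (fun ξ => if Antitone ξ then
        MvPolynomial.eval (fun _ => (1 : ℤ)) (s ξ) else 0) -
      schurSeries s (fun ξ => if Antitone ξ ∧ ξ ⟨r - 1, by omega⟩ = 0 then
        MvPolynomial.eval (fun _ => (1 : ℤ)) (s ξ) else 0) =
      (∏ i, MvPowerSeries.X i) * schurSeries s (fun ξ => if Antitone ξ then
        MvPolynomial.eval (fun _ => (1 : ℤ)) (s ξ) else 0) := by
  have h1 := (hasSum_schurSeries hs (fun ξ => if Antitone ξ then
        MvPolynomial.eval (fun _ => (1 : ℤ)) (s ξ) else 0)).sub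
    (hasSum_schurSeries hs (fun ξ => if Antitone ξ ∧ ξ ⟨r - 1, by omega⟩ = 0 then
        MvPolynomial.eval (fun _ => (1 : ℤ)) (s ξ) else 0))
  have hinj : Function.Injective fun (ξ : Fin r → ℕ) (j : Fin r) => ξ j + 1 :=
    fun ξ η h => funext fun j => Nat.succ_injective (congrFun h j)
  refine HasSum.unique ((hinj.hasSum_iff ?_).2 h1) ?_
  · intro ξ hξ
    by_cases ha : Antitone ξ
    · have h0 : ξ ⟨r - 1, by omega⟩ = 0 := by
        by_contra h0
        refine hξ ⟨fun j => ξ j - 1, funext fun j => ?_⟩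
        have hle : ξ ⟨r - 1, by omega⟩ ≤ ξ j :=
          ha (Fin.le_def.2 (by have := j.isLt; simp only; omega))
        simp only
        omega
      simp [ha, h0]
    · simp [ha]
  · have hmul := (hasSum_schurSeries hs (fun ξ => if Antitone ξ then
        MvPolynomial.eval (fun _ => (1 : ℤ)) (s ξ) else 0)).mul_left
        (∏ i, MvPowerSeries.X i)
    refine (congrArg (fun f => HasSum f _) (funext fun ξ => ?_)).mp hmul
    have ha : Antitone (fun j => ξ j + 1) ↔ Antitone ξ := by simp [Antitone]
    simp only [Function.comp_apply, ha, Nat.succ_ne_zero, and_false, if_false, map_zero,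
      zero_mul, sub_zero, schur_add_one hs ξ, map_mul, map_prod, MvPolynomial.eval_X,
      Finset.prod_const_one, one_mul, toSeries_X]
    ring

open Classical in
theorem schurSum'_eq {r : ℕ} (hr : 0 < r) {s : (Fin r → ℕ) → MvPolynomial (Fin r) ℤ}
    (hs : ∀ ξ, SchurDef r ξ (s ξ)) :
    schurSum' r s = schurSeries s (fun ξ => if Antitone ξ ∧ ξ ⟨r - 1, by omega⟩ = 0 then
        MvPolynomial.eval (fun _ => (1 : ℤ)) (s ξ) else 0) := by
  funext d
  refine Finset.sum_congr rfl fun ξ _ => ?_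
  by_cases hd : ∑ j, (ξ j : ℕ) = ∑ i, d i
  · have hlt : r - 1 < r := by omega
    have hiff : ((∀ i j : Fin r, i ≤ j → (ξ j : ℕ) ≤ (ξ i : ℕ)) ∧
          (∀ h : r - 1 < r, (ξ ⟨r - 1, h⟩ : ℕ) = 0) ∧ (∑ j, (ξ j : ℕ)) = ∑ i, d i) ↔
        (Antitone fun j => (ξ j : ℕ)) ∧ (ξ ⟨r - 1, hlt⟩ : ℕ) = 0 :=
      ⟨fun h => ⟨fun i j => h.1 i j, h.2.1 hlt⟩,
        fun h => ⟨fun i j hij => h.1 hij, fun _ => h.2, hd⟩⟩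
    rw [Int.cast_id, ite_mul, zero_mul]
    exact if_congr hiff rfl rfl
  · rw [coeff_schur_eq_zero (hs _) d (Ne.symm hd)]
    simp

/-- As formal power series in `x₁,…,x_r` over `ℤ`:
`(1 - x₁⋯x_r)/((1-x₁)^r ⋯ (1-x_r)^r) = Σ_{λ ∈ Par(r-1)} s_λ(1,…,1)·s_λ(x₁,…,x_r)`. -/
theorem stmt3 (r : ℕ) (hr : 0 < r) (s : (Fin r → ℕ) → MvPolynomial (Fin r) ℤ)
    (hs : ∀ ξ : Fin r → ℕ, SchurDef r ξ (s ξ)) :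
    (∏ i : Fin r, (1 - MvPowerSeries.X i) ^ r) * schurSum' r s
      = 1 - ∏ i : Fin r, MvPowerSeries.X i := by
  classical
  have h1 := cauchy_identity_one hs
  have h2 := schurSeries_sub hr hs
  rw [schurSum'_eq hr hs]
  linear_combination (1 - ∏ i : Fin r, MvPowerSeries.X i) * h1 -
    (∏ i : Fin r, (1 - MvPowerSeries.X i) ^ r) * h2
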